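/- arXiv:2011.01814 — 9 statements merged into one kernel-verified Lean document; each statement's English description precedes it below -/
import Mathlib

section
/- Assume the PUs are sorted. Then no saturated PU appears after a non-saturated PU: for all indices i ≤ j ≤ k−1, if PU i is non-saturated then PU j is non-saturated. (Lemma 1 of the paper.) -/
/-!
A non-saturated PU receives exactly its proportional share of the remaining load, so it leaves the
ratio `L i / S i` of remaining load to remaining speed unchanged. PU `i` is non-saturated exactly
when this ratio is at most `m i / c i`, and sortedness says that these thresholds increase with `i`.
-/

theorem monotoneOn_div_of_antitoneOn_div {α G₀ : Type*} [Preorder α] [GroupWithZero G₀]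
    [PartialOrder G₀] [PosMulReflectLT G₀] [MulPosReflectLT G₀] {f g : α → G₀} {s : Set α}
    (hf : ∀ x ∈ s, 0 < f x) (hg : ∀ x ∈ s, 0 < g x) (h : AntitoneOn (fun x ↦ f x / g x) s) :
    MonotoneOn (fun x ↦ g x / f x) s := by
  have hinv := antitoneOn_inv_pos.comp h fun x hx ↦ div_pos (hf x hx) (hg x hx)
  simpa only [Function.comp_def, inv_div] using hinv

section Field

variable {K : Type*} [Field K]

theorem sub_mul_div_div_sub {x a s : K} (hs : s ≠ 0) (hsa : s - a ≠ 0) :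
    (x - a * x / s) / (s - a) = x / s := by
  field_simp

variable [LinearOrder K]

/-- An execution of the greedy block-size algorithm on `k` processing units with speeds `c` and
memory capacities `m`: when unit `i` is served, `S i` is the total speed of the units not yet
served, `L i` the load not yet assigned, `desW i` the desired share of unit `i`, and `tw i` the load
it is assigned. The initial load `L 0` is arbitrary, and `S`, `desW` and `tw` are unconstrained from
index `k` on. -/
structure IsGreedyAllocation (k : ℕ) (c m S L desW tw : ℕ → K) : Prop where
  remainingSpeed_eq : ∀ i < k, S i = ∑ j ∈ Finset.Ico i k, c j
  desired_eq : ∀ i < k, desW i = c i * L i / S i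
  assigned_eq : ∀ i < k, tw i = min (desW i) (m i)
  load_succ : ∀ i < k, L (i + 1) = L i - tw i

end Field

namespace IsGreedyAllocation

variable {K : Type*} [Field K] [LinearOrder K] {k i : ℕ} {c m S L desW tw : ℕ → K}

theorem remainingSpeed_succ (h : IsGreedyAllocation k c m S L desW tw) (hi : i + 1 < k) :
    S (i + 1) = S i - c i := by
  have hik : i < k := i.lt_succ_self.trans hi
  rw [h.remainingSpeed_eq i hik, h.remainingSpeed_eq (i + 1) hi,
    Finset.sum_eq_sum_Ico_succ_bot hik, add_sub_cancel_left]

theorem load_succ_of_desired_le (h : IsGreedyAllocation k c m S L desW tw) (hi : i < k)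
    (hle : desW i ≤ m i) : L (i + 1) = L i - c i * L i / S i := by
  rw [h.load_succ i hi, h.assigned_eq i hi, min_eq_left hle, h.desired_eq i hi]

variable [IsStrictOrderedRing K]

theorem remainingSpeed_pos (h : IsGreedyAllocation k c m S L desW tw)
    (hc : ∀ i < k, 0 < c i) (hi : i < k) : 0 < S i := by
  rw [h.remainingSpeed_eq i hi]
  exact Finset.sum_pos (fun j hj ↦ hc j (Finset.mem_Ico.mp hj).2) (Finset.nonempty_Ico.mpr hi)

theorem load_div_remainingSpeed_succ (h : IsGreedyAllocation k c m S L desW tw)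
    (hc : ∀ i < k, 0 < c i) (hi : i + 1 < k) (hle : desW i ≤ m i) :
    L (i + 1) / S (i + 1) = L i / S i := by
  have hik : i < k := i.lt_succ_self.trans hi
  have hS := h.remainingSpeed_succ hi
  have hS_succ_ne := (h.remainingSpeed_pos hc hi).ne'
  rw [hS] at hS_succ_ne
  rw [h.load_succ_of_desired_le hik hle, hS]
  exact sub_mul_div_div_sub (h.remainingSpeed_pos hc hik).ne' hS_succ_ne

theorem desired_le_iff (h : IsGreedyAllocation k c m S L desW tw) (hi : i < k) (hci : 0 < c i) :
    desW i ≤ m i ↔ L i / S i ≤ m i / c i := by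
  rw [h.desired_eq i hi, mul_div_assoc, le_div_iff₀' hci]

theorem desired_succ_le (h : IsGreedyAllocation k c m S L desW tw)
    (hc : ∀ i < k, 0 < c i) (hi : i + 1 < k) (hsorted : m i / c i ≤ m (i + 1) / c (i + 1))
    (hle : desW i ≤ m i) : desW (i + 1) ≤ m (i + 1) := by
  have hik : i < k := i.lt_succ_self.trans hi
  rw [h.desired_le_iff hi (hc _ hi)]
  calc
    L (i + 1) / S (i + 1) = L i / S i := h.load_div_remainingSpeed_succ hc hi hle
    _ ≤ m i / c i := (h.desired_le_iff hik (hc i hik)).mp hle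
    _ ≤ m (i + 1) / c (i + 1) := hsorted

end IsGreedyAllocation

theorem stmt_0_general {K : Type*} [Field K] [LinearOrder K] [IsStrictOrderedRing K]
    {k : ℕ} {c m S L desW tw : ℕ → K} (h : IsGreedyAllocation k c m S L desW tw)
    (hc : ∀ i < k, 0 < c i) (hsorted : MonotoneOn (fun i ↦ m i / c i) (Set.Iio k))
    {i j : ℕ} (hij : i ≤ j) (hjk : j < k) (hi : desW i ≤ m i) : desW j ≤ m j := by
  induction j, hij using Nat.le_induction with
  | base => exact hi
  | succ j _ ih =>
    have hj : j < k := j.lt_succ_self.trans hjk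
    exact h.desired_succ_le hc hjk (hsorted hj hjk j.le_succ) (ih hj)

theorem stmt_0
    (k : ℕ) (hk : 1 ≤ k) (n : ℝ) (hn : 0 < n)
    (c m : ℕ → ℝ)
    (hc : ∀ i < k, 0 < c i) (hm : ∀ i < k, 0 < m i)
    (S L desW tw : ℕ → ℝ)
    (hS : ∀ i ≤ k, S i = ∑ j ∈ Finset.Ico i k, c j)
    (hL0 : L 0 = n)
    (hdesW : ∀ i < k, desW i = c i * L i / S i)
    (htw : ∀ i < k, tw i = min (desW i) (m i))
    (hLrec : ∀ i < k, L (i + 1) = L i - tw i)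
    (hsorted : ∀ i j, i ≤ j → j < k → c i / m i ≥ c j / m j)
    (i j : ℕ) (hij : i ≤ j) (hjk : j < k)
    (hi_nonsat : desW i ≤ m i) :
    desW j ≤ m j :=
  have hratio : AntitoneOn (fun i ↦ c i / m i) (Set.Iio k) :=
    fun i _ j hj hij ↦ hsorted i j hij hj
  stmt_0_general ⟨fun i hi ↦ hS i hi.le, hdesW, htw, hLrec⟩ hc
    (monotoneOn_div_of_antitoneOn_div hc hm hratio) hij hjk hi_nonsat
end

section
/- Assume the PUs are sorted and let PU d (0 ≤ d ≤ k−1) be non-saturated. Then every PU j with d ≤ j ≤ k−1 receives a load proportionate to its speed relative to the state at iteration d: tw j · S d = c j · L d, i.e., tw j / c j = L d / S d. (The inductive core of the proof of Theorem 1.) -/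
/-!
Call `L i / S i` the rate at iteration `i`. A non-saturated PU takes the fraction `c i / S i` of
the remaining load, so the rate does not change. PU `i` is non-saturated precisely when the rate
is at most `m i / c i`, and sorting makes `m i / c i` smallest at `i = d` among all later PUs. Hence
non-saturation at `d` propagates to every later PU, each of which receives `c i` times the rate at
`d`.
-/

/-- A run of the greedy block-size algorithm on `k` processing units with speeds `c` and memory
capacities `m`: `S i` is the total speed of the units from `i` on, `L i` the load remaining before
unit `i` is served, `desW i` its desired load and `tw i` the load it receives. The total load is
`L 0`, which is left arbitrary; the sequences are constrained only at the indices the algorithm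
visits. -/
structure IsGreedyRun {K : Type*} [Field K] [LinearOrder K]
    (k : ℕ) (c m S L desW tw : ℕ → K) : Prop where
  speed_pos : ∀ i < k, 0 < c i
  totalSpeed_eq_sum : ∀ i ≤ k, S i = ∑ j ∈ Finset.Ico i k, c j
  desired_eq : ∀ i < k, desW i = c i * L i / S i
  load_eq_min : ∀ i < k, tw i = min (desW i) (m i)
  remaining_succ : ∀ i < k, L (i + 1) = L i - tw i

namespace IsGreedyRun

variable {K : Type*} [Field K] [LinearOrder K] {k : ℕ} {c m S L desW tw : ℕ → K} {d i j : ℕ}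

theorem totalSpeed_eq_add_succ (h : IsGreedyRun k c m S L desW tw) (hi : i < k) :
    S i = c i + S (i + 1) := by
  rw [h.totalSpeed_eq_sum i hi.le, h.totalSpeed_eq_sum (i + 1) hi,
    Finset.sum_eq_sum_Ico_succ_bot hi]

theorem load_eq_speed_mul_rate (h : IsGreedyRun k c m S L desW tw) (hi : i < k)
    (hnonsat : desW i ≤ m i) : tw i = c i * (L i / S i) := by
  rw [h.load_eq_min i hi, min_eq_left hnonsat, h.desired_eq i hi, mul_div_assoc]

variable [IsStrictOrderedRing K]

theorem totalSpeed_pos (h : IsGreedyRun k c m S L desW tw) (hi : i < k) : 0 < S i := by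
  rw [h.totalSpeed_eq_sum i hi.le]
  exact Finset.sum_pos (fun j hj => h.speed_pos j (Finset.mem_Ico.mp hj).2)
    (Finset.nonempty_Ico.mpr hi)

theorem desired_le_iff_rate_le (h : IsGreedyRun k c m S L desW tw) (hi : i < k) :
    desW i ≤ m i ↔ L i / S i ≤ m i / c i := by
  rw [h.desired_eq i hi, mul_div_assoc, le_div_iff₀' (h.speed_pos i hi)]

theorem rate_succ_eq (h : IsGreedyRun k c m S L desW tw) (hi : i + 1 < k)
    (hnonsat : desW i ≤ m i) : L (i + 1) / S (i + 1) = L i / S i := by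
  have hik : i < k := i.lt_succ_self.trans hi
  have hS : S i ≠ 0 := (h.totalSpeed_pos hik).ne'
  rw [div_eq_iff (h.totalSpeed_pos hi).ne']
  calc L (i + 1) = L i - c i * (L i / S i) := by
        rw [h.remaining_succ i hik, h.load_eq_speed_mul_rate hik hnonsat]
    _ = L i / S i * (S i - c i) := by field_simp
    _ = L i / S i * S (i + 1) := by rw [h.totalSpeed_eq_add_succ hik, add_sub_cancel_left]

theorem rate_eq_of_forall_rate_le (h : IsGreedyRun k c m S L desW tw)
    (hdj : d ≤ j) (hjk : j < k) (hle : ∀ i, d ≤ i → i < j → L d / S d ≤ m i / c i) :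
    L j / S j = L d / S d := by
  induction j, hdj using Nat.le_induction with
  | base => rfl
  | succ j hdj ih =>
    have hjk' : j < k := j.lt_succ_self.trans hjk
    have hrate : L j / S j = L d / S d :=
      ih hjk' fun i hdi hij => hle i hdi (hij.trans j.lt_succ_self)
    have hnonsat : desW j ≤ m j :=
      (h.desired_le_iff_rate_le hjk').mpr (hrate.trans_le (hle j hdj j.lt_succ_self))
    rw [h.rate_succ_eq hjk hnonsat, hrate]

end IsGreedyRun

theorem stmt_6_general {K : Type*} [Field K] [LinearOrder K] [IsStrictOrderedRing K]
    {k : ℕ} {c m S L desW tw : ℕ → K} (h : IsGreedyRun k c m S L desW tw)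
    {d : ℕ} (hd_nonsat : desW d ≤ m d)
    (hmin : ∀ i, d ≤ i → i < k → m d / c d ≤ m i / c i)
    {j : ℕ} (hdj : d ≤ j) (hjk : j < k) :
    tw j * S d = c j * L d ∧ tw j / c j = L d / S d := by
  have hdk : d < k := hdj.trans_lt hjk
  have hle : ∀ i, d ≤ i → i < k → L d / S d ≤ m i / c i := fun i hdi hik =>
    ((h.desired_le_iff_rate_le hdk).mp hd_nonsat).trans (hmin i hdi hik)
  have hrate : L j / S j = L d / S d :=
    h.rate_eq_of_forall_rate_le hdj hjk fun i hdi hij => hle i hdi (hij.trans hjk)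
  have hnonsat : desW j ≤ m j :=
    (h.desired_le_iff_rate_le hjk).mpr (hrate.trans_le (hle j hdj hjk))
  have hload : tw j = c j * (L d / S d) := by
    rw [h.load_eq_speed_mul_rate hjk hnonsat, hrate]
  constructor
  · rw [hload, mul_assoc, div_mul_cancel₀ _ (h.totalSpeed_pos hdk).ne']
  · rw [hload, mul_div_cancel_left₀ _ (h.speed_pos j hjk).ne']

theorem stmt_6
    (k : ℕ) (hk : 1 ≤ k) (n : ℝ) (hn : 0 < n)
    (c m : ℕ → ℝ)
    (hc : ∀ i < k, 0 < c i) (hm : ∀ i < k, 0 < m i)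
    (S L desW tw : ℕ → ℝ)
    (hS : ∀ i ≤ k, S i = ∑ j ∈ Finset.Ico i k, c j)
    (hL0 : L 0 = n)
    (hdesW : ∀ i < k, desW i = c i * L i / S i)
    (htw : ∀ i < k, tw i = min (desW i) (m i))
    (hLrec : ∀ i < k, L (i + 1) = L i - tw i)
    (hsorted : ∀ i j, i ≤ j → j < k → c i / m i ≥ c j / m j)
    (d : ℕ) (hdk : d < k) (hd_nonsat : desW d ≤ m d)
    (j : ℕ) (hdj : d ≤ j) (hjk : j < k) :
    tw j * S d = c j * L d ∧ tw j / c j = L d / S d := by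
  refine stmt_6_general ⟨hc, hS, hdesW, htw, hLrec⟩ hd_nonsat (fun i hdi hik => ?_) hdj hjk
  simpa only [inv_div] using inv_anti₀ (div_pos (hc i hik) (hm i hik)) (hsorted d i hdi hik)
end

section
/- Saturated steps strictly increase the load-to-speed ratio: if 0 ≤ i ≤ k−2 and PU i is saturated, then L (i+1) · S i > L i · S (i+1), i.e., L (i+1) / S (i+1) > L i / S i. -/
/-!
With load `l` left for a unit of speed `c` and units of total speed `t` after it, the desired weight
`c * l / (c + t)` is the share that preserves the load-to-speed ratio: it leaves `t * l / (c + t)`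
for speed `t`. A saturated unit takes only `m`, strictly less than that share, so the ratio grows.
-/

section

variable {K : Type*} [Field K] [LinearOrder K] [IsStrictOrderedRing K]

theorem lt_mul_div_add_iff_mul_lt_sub_mul {c l m t : K} (hct : 0 < c + t) :
    m < c * l / (c + t) ↔ l * t < (l - m) * (c + t) := by
  have sub_eq_sub : (l - m) * (c + t) - l * t = c * l - m * (c + t) := by ring
  rw [lt_div_iff₀ hct, ← sub_pos, ← sub_eq_sub, sub_pos]

theorem stmt_8_general {k i : ℕ} {c m S L desW tw : ℕ → K}
    (hc : ∀ j < k, 0 < c j)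
    (hS : ∀ j ≤ k, S j = ∑ l ∈ Finset.Ico j k, c l)
    (hdesW : ∀ j < k, desW j = c j * L j / S j)
    (htw : ∀ j < k, tw j = min (desW j) (m j))
    (hLrec : ∀ j < k, L (j + 1) = L j - tw j)
    (hik : i + 1 < k) (hsat : m i < desW i) :
    L i * S (i + 1) < L (i + 1) * S i ∧ L i / S i < L (i + 1) / S (i + 1) := by
  have hi : i < k := i.lt_succ_self.trans hik
  have S_pos : ∀ j < k, 0 < S j := fun j hj ↦ by
    rw [hS j hj.le]
    exact Finset.sum_pos (fun l hl ↦ hc l (Finset.mem_Ico.mp hl).2) (Finset.nonempty_Ico.mpr hj)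
  have S_eq : S i = c i + S (i + 1) := by
    rw [hS i hi.le, hS (i + 1) hik.le, Finset.sum_eq_sum_Ico_succ_bot hi]
  have L_succ : L (i + 1) = L i - m i := by rw [hLrec i hi, htw i hi, min_eq_right hsat.le]
  have cross_lt : L i * S (i + 1) < L (i + 1) * S i := by
    rw [hdesW i hi, S_eq] at hsat
    rw [L_succ, S_eq]
    exact (lt_mul_div_add_iff_mul_lt_sub_mul (S_eq ▸ S_pos i hi)).mp hsat
  exact ⟨cross_lt, (div_lt_div_iff₀ (S_pos i hi) (S_pos (i + 1) hik)).mpr cross_lt⟩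

end

theorem stmt_8
    (k : ℕ) (hk : 1 ≤ k) (n : ℝ) (hn : 0 < n)
    (c m : ℕ → ℝ)
    (hc : ∀ i < k, 0 < c i) (hm : ∀ i < k, 0 < m i)
    (S L desW tw : ℕ → ℝ)
    (hS : ∀ i ≤ k, S i = ∑ j ∈ Finset.Ico i k, c j)
    (hL0 : L 0 = n)
    (hdesW : ∀ i < k, desW i = c i * L i / S i)
    (htw : ∀ i < k, tw i = min (desW i) (m i))
    (hLrec : ∀ i < k, L (i + 1) = L i - tw i)
    (hsorted : ∀ i j, i ≤ j → j < k → c i / m i ≥ c j / m j)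
    (i : ℕ) (hik : i + 1 < k) (hsat : desW i > m i) :
    L (i + 1) * S i > L i * S (i + 1) ∧ L (i + 1) / S (i + 1) > L i / S i :=
  stmt_8_general hc hS hdesW htw hLrec hik hsat
end

section
/- Assume the PUs are sorted. If PU i is saturated and PU d is non-saturated (0 ≤ i, d ≤ k−1), then the normalized load of PU i is strictly smaller than that of PU d: tw i / c i < tw d / c d, equivalently m i · S d < c i · L d. -/
/-!
Write `ρ i = L i / S i` for the load per unit of speed that remains before PU `i`, so that
`desW i = c i * ρ i` and `tw i / c i = min (ρ i) (m i / c i)`. A non-saturated PU takes exactly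
its proportional share, which leaves `ρ` unchanged; a saturated one takes less, which raises `ρ`.
Hence `ρ` is nondecreasing. Sorting makes `m i / c i` nondecreasing too, so once
`ρ i ≤ m i / c i` holds it persists: every saturated PU `i` precedes every non-saturated PU `d`,
and `tw i / c i = m i / c i < ρ i ≤ ρ d = tw d / c d`.
-/

theorem monotoneOn_div_of_antitoneOn_div_s9 {ι K : Type*} [Preorder ι] [Field K] [LinearOrder K]
    [IsStrictOrderedRing K] {s : Set ι} {f g : ι → K} (hf : ∀ i ∈ s, 0 < f i)
    (hg : ∀ i ∈ s, 0 < g i) (h : AntitoneOn (fun i => f i / g i) s) :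
    MonotoneOn (fun i => g i / f i) s := fun i hi j hj hij => by
  simpa only [inv_div] using inv_anti₀ (div_pos (hf j hj) (hg j hj)) (h hi hj hij)

/-- A run of the greedy block-size algorithm on `k` PUs with positive speeds `c` and capacities
`m`. The sequences are indexed by `ℕ` and constrained only at indices of PUs (and at `k` for `S`
and `L`). The total load is `L 0`. -/
structure IsGreedyRun_s9 {K : Type*} [Field K] [LinearOrder K] (k : ℕ) (c m S L desW tw : ℕ → K) :
    Prop where
  speed_pos : ∀ i < k, 0 < c i
  speedSum_eq : ∀ i ≤ k, S i = ∑ j ∈ Finset.Ico i k, c j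
  desW_eq : ∀ i < k, desW i = c i * L i / S i
  tw_eq : ∀ i < k, tw i = min (desW i) (m i)
  load_succ : ∀ i < k, L (i + 1) = L i - tw i

namespace IsGreedyRun_s9

variable {K : Type*} [Field K] [LinearOrder K] {k i j : ℕ} {c m S L desW tw : ℕ → K}

theorem speedSum_eq_add_succ (h : IsGreedyRun_s9 k c m S L desW tw) (hi : i < k) :
    S i = c i + S (i + 1) := by
  rw [h.speedSum_eq i hi.le, h.speedSum_eq (i + 1) hi, Finset.sum_eq_sum_Ico_succ_bot hi]

theorem desW_eq_speed_mul (h : IsGreedyRun_s9 k c m S L desW tw) (hi : i < k) :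
    desW i = c i * (L i / S i) := by
  rw [h.desW_eq i hi, mul_div_assoc]

variable [IsStrictOrderedRing K]

theorem speedSum_pos (h : IsGreedyRun_s9 k c m S L desW tw) (hi : i < k) : 0 < S i := by
  rw [h.speedSum_eq i hi.le]
  exact Finset.sum_pos (fun j hj => h.speed_pos j (Finset.mem_Ico.mp hj).2)
    (Finset.nonempty_Ico.mpr hi)

theorem desW_le_iff (h : IsGreedyRun_s9 k c m S L desW tw) (hi : i < k) :
    desW i ≤ m i ↔ L i / S i ≤ m i / c i := by
  rw [h.desW_eq_speed_mul hi, le_div_iff₀' (h.speed_pos i hi)]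

theorem tw_div_speed (h : IsGreedyRun_s9 k c m S L desW tw) (hi : i < k) :
    tw i / c i = min (L i / S i) (m i / c i) := by
  have hc := h.speed_pos i hi
  rw [h.tw_eq i hi, ← min_div_div_right hc.le, h.desW_eq_speed_mul hi,
    mul_div_cancel_left₀ _ hc.ne']

theorem load_succ_eq_loadPerSpeed_mul_add (h : IsGreedyRun_s9 k c m S L desW tw) (hi : i < k) :
    L (i + 1) = L i / S i * S (i + 1) + (desW i - tw i) := by
  have hL : L i = L i / S i * (c i + S (i + 1)) := by
    rw [← h.speedSum_eq_add_succ hi, div_mul_cancel₀ _ (h.speedSum_pos hi).ne']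
  rw [h.load_succ i hi, h.desW_eq_speed_mul hi]
  linear_combination hL

theorem loadPerSpeed_succ_eq (h : IsGreedyRun_s9 k c m S L desW tw) (hi : i + 1 < k) :
    L (i + 1) / S (i + 1) = L i / S i + (desW i - tw i) / S (i + 1) := by
  rw [h.load_succ_eq_loadPerSpeed_mul_add (Nat.lt_of_succ_lt hi), add_div,
    mul_div_cancel_right₀ _ (h.speedSum_pos hi).ne']

theorem monotoneOn_loadPerSpeed (h : IsGreedyRun_s9 k c m S L desW tw) :
    MonotoneOn (fun i => L i / S i) (Set.Iio k) := by
  refine monotoneOn_of_le_succ Set.ordConnected_Iio fun i _ hi hi' => ?_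
  have htw : tw i ≤ desW i := (h.tw_eq i hi).trans_le (min_le_left _ _)
  calc L i / S i ≤ L i / S i + (desW i - tw i) / S (i + 1) :=
        le_add_of_nonneg_right (div_nonneg (sub_nonneg.mpr htw) (h.speedSum_pos hi').le)
    _ = L (i + 1) / S (i + 1) := (h.loadPerSpeed_succ_eq hi').symm

theorem loadPerSpeed_succ_of_desW_le (h : IsGreedyRun_s9 k c m S L desW tw) (hi : i + 1 < k)
    (hns : desW i ≤ m i) : L (i + 1) / S (i + 1) = L i / S i := by
  rw [h.loadPerSpeed_succ_eq hi, h.tw_eq i (Nat.lt_of_succ_lt hi), min_eq_left hns, sub_self,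
    zero_div, add_zero]

theorem desW_le_of_le (h : IsGreedyRun_s9 k c m S L desW tw)
    (hsorted : MonotoneOn (fun i => m i / c i) (Set.Iio k)) (hij : i ≤ j) (hj : j < k)
    (hns : desW i ≤ m i) : desW j ≤ m j := by
  induction j, hij using Nat.le_induction with
  | base => exact hns
  | succ j _ ih =>
    have hjk : j < k := Nat.lt_of_succ_lt hj
    have hns_j : desW j ≤ m j := ih hjk
    rw [h.desW_le_iff hj]
    calc L (j + 1) / S (j + 1) = L j / S j := h.loadPerSpeed_succ_of_desW_le hj hns_j
      _ ≤ m j / c j := (h.desW_le_iff hjk).mp hns_j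
      _ ≤ m (j + 1) / c (j + 1) := hsorted hjk hj j.le_succ

end IsGreedyRun_s9

theorem stmt_9_general {K : Type*} [Field K] [LinearOrder K] [IsStrictOrderedRing K]
    {k i d : ℕ} {c m S L desW tw : ℕ → K} (h : IsGreedyRun_s9 k c m S L desW tw)
    (hsorted : MonotoneOn (fun i => m i / c i) (Set.Iio k)) (hi : i < k) (hd : d < k)
    (hi_sat : m i < desW i) (hd_nonsat : desW d ≤ m d) :
    tw i / c i < tw d / c d ∧ m i * S d < c i * L d := by
  have hid : i ≤ d := by
    by_contra! hdi
    exact hi_sat.not_ge (h.desW_le_of_le hsorted hdi.le hi hd_nonsat)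
  have hi_lt : m i / c i < L i / S i := lt_of_not_ge (mt (h.desW_le_iff hi).mpr hi_sat.not_ge)
  have hlt : m i / c i < L d / S d := hi_lt.trans_le (h.monotoneOn_loadPerSpeed hi hd hid)
  constructor
  · rwa [h.tw_div_speed hi, h.tw_div_speed hd, min_eq_right hi_lt.le,
      min_eq_left ((h.desW_le_iff hd).mp hd_nonsat)]
  · rwa [div_lt_div_iff₀ (h.speed_pos i hi) (h.speedSum_pos hd), mul_comm (L d)] at hlt

theorem stmt_9
    (k : ℕ) (hk : 1 ≤ k) (n : ℝ) (hn : 0 < n)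
    (c m : ℕ → ℝ)
    (hc : ∀ i < k, 0 < c i) (hm : ∀ i < k, 0 < m i)
    (S L desW tw : ℕ → ℝ)
    (hS : ∀ i ≤ k, S i = ∑ j ∈ Finset.Ico i k, c j)
    (hL0 : L 0 = n)
    (hdesW : ∀ i < k, desW i = c i * L i / S i)
    (htw : ∀ i < k, tw i = min (desW i) (m i))
    (hLrec : ∀ i < k, L (i + 1) = L i - tw i)
    (hsorted : ∀ i j, i ≤ j → j < k → c i / m i ≥ c j / m j)
    (i d : ℕ) (hik : i < k) (hdk : d < k)
    (hi_sat : desW i > m i) (hd_nonsat : desW d ≤ m d) :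
    tw i / c i < tw d / c d ∧ m i * S d < c i * L d :=
  stmt_9_general ⟨hc, hS, hdesW, htw, hLrec⟩
    (monotoneOn_div_of_antitoneOn_div_s9 hc hm fun i _ j hj hij => hsorted i j hij hj)
    hik hdk hi_sat hd_nonsat
end

section
/- Assume the PUs are sorted, that at least one PU is non-saturated, and let d be the least index of a non-saturated PU. Then the maximum normalized load of the computed assignment equals the common value of the non-saturated PUs: max_{0 ≤ i ≤ k−1} (tw i / c i) = L d / S d = tw d / c d. -/
/-! The argument follows the *level* `L i / S i`, the normalized load that would result from sharing
what is left after the first `i` units among the others in proportion to their speeds. A unit never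
takes more than the current level per unit of speed, so by the mediant inequality the level never
decreases; a unit that takes exactly the level leaves it unchanged. If unit `d` is non-saturated and
no later unit has a smaller normalized capacity `m i / c i`, then all later units are non-saturated
as well, and the level stays at `L d / S d`. The normalized loads are therefore all at most
`L d / S d`, which unit `d` attains. -/

section

variable {K : Type*} [Field K]

lemma sub_div_sub_eq_div_of_div_eq_div {a b x y : K} (hb : b ≠ 0) (hy : y ≠ 0) (hyb : y - b ≠ 0)
    (h : a / b = x / y) : (x - a) / (y - b) = x / y := by
  rw [div_eq_div_iff hb hy] at h
  rw [div_eq_div_iff hyb hy]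
  linear_combination -h

variable [LinearOrder K]

lemma div_le_sub_div_sub_of_div_le_div [IsStrictOrderedRing K] {a b x y : K} (hb : 0 < b)
    (hby : b < y) (h : a / b ≤ x / y) : x / y ≤ (x - a) / (y - b) := by
  have hy : 0 < y := hb.trans hby
  rw [div_le_div_iff₀ hb hy] at h
  rw [div_le_div_iff₀ hy (sub_pos.mpr hby)]
  linear_combination h

/-- A run of the greedy block-size algorithm on `k` processing units with speeds `c` and capacities
`m`: `S i` is the total speed of the units from `i` on, `L i` the load left for them, `desW i` the
share of `L i` proportional to the speed of unit `i`, and `tw i` the load assigned to unit `i`.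
Sequences are indexed by `ℕ` and constrained only where the algorithm computes them. -/
structure IsGreedyAssignment (k : ℕ) (c m S L desW tw : ℕ → K) : Prop where
  remainingSpeed_eq_sum : ∀ i ≤ k, S i = ∑ j ∈ Finset.Ico i k, c j
  desired_eq : ∀ i < k, desW i = c i * L i / S i
  assigned_eq : ∀ i < k, tw i = min (desW i) (m i)
  remainingLoad_succ : ∀ i < k, L (i + 1) = L i - tw i

namespace IsGreedyAssignment

variable {k d i : ℕ} {c m S L desW tw : ℕ → K}

lemma remainingSpeed_succ (h : IsGreedyAssignment k c m S L desW tw) (hi : i < k) :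
    S (i + 1) = S i - c i := by
  rw [h.remainingSpeed_eq_sum i hi.le, h.remainingSpeed_eq_sum (i + 1) hi,
    Finset.sum_eq_sum_Ico_succ_bot hi, add_sub_cancel_left]

lemma desired_div_speed (h : IsGreedyAssignment k c m S L desW tw) (hi : i < k) (hci : c i ≠ 0) :
    desW i / c i = L i / S i := by
  rw [h.desired_eq i hi, mul_div_assoc, mul_div_cancel_left₀ _ hci]

variable [IsStrictOrderedRing K]

lemma remainingSpeed_pos (h : IsGreedyAssignment k c m S L desW tw) (hc : ∀ i < k, 0 < c i)
    (hi : i < k) : 0 < S i := by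
  rw [h.remainingSpeed_eq_sum i hi.le]
  exact Finset.sum_pos (fun j hj ↦ hc j (Finset.mem_Ico.mp hj).2) (Finset.nonempty_Ico.mpr hi)

lemma assigned_div_speed (h : IsGreedyAssignment k c m S L desW tw) (hi : i < k) (hci : 0 < c i) :
    tw i / c i = min (L i / S i) (m i / c i) := by
  rw [h.assigned_eq i hi, ← min_div_div_right hci.le, h.desired_div_speed hi hci.ne']

lemma desired_le_capacity_iff (h : IsGreedyAssignment k c m S L desW tw) (hi : i < k)
    (hci : 0 < c i) : desW i ≤ m i ↔ L i / S i ≤ m i / c i := by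
  rw [← h.desired_div_speed hi hci.ne', div_le_div_iff_of_pos_right hci]

lemma level_le_level_succ (h : IsGreedyAssignment k c m S L desW tw) (hc : ∀ i < k, 0 < c i)
    (hi : i + 1 < k) : L i / S i ≤ L (i + 1) / S (i + 1) := by
  have hik : i < k := Nat.lt_of_succ_lt hi
  have hSi : c i < S i := sub_pos.mp (h.remainingSpeed_succ hik ▸ h.remainingSpeed_pos hc hi)
  rw [h.remainingLoad_succ i hik, h.remainingSpeed_succ hik]
  refine div_le_sub_div_sub_of_div_le_div (hc i hik) hSi ?_
  exact (h.assigned_div_speed hik (hc i hik)).trans_le (min_le_left _ _)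

lemma monotoneOn_level (h : IsGreedyAssignment k c m S L desW tw) (hc : ∀ i < k, 0 < c i) :
    MonotoneOn (fun i ↦ L i / S i) (Set.Iio k) :=
  monotoneOn_of_le_add_one Set.ordConnected_Iio fun _ _ _ hi ↦ h.level_le_level_succ hc hi

lemma level_succ_eq_level (h : IsGreedyAssignment k c m S L desW tw) (hc : ∀ i < k, 0 < c i)
    (hi : i + 1 < k) (hcap : L i / S i ≤ m i / c i) : L (i + 1) / S (i + 1) = L i / S i := by
  have hik : i < k := Nat.lt_of_succ_lt hi
  have hSi : S i - c i ≠ 0 := h.remainingSpeed_succ hik ▸ (h.remainingSpeed_pos hc hi).ne'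
  rw [h.remainingLoad_succ i hik, h.remainingSpeed_succ hik]
  refine sub_div_sub_eq_div_of_div_eq_div (hc i hik).ne' (h.remainingSpeed_pos hc hik).ne' hSi ?_
  rw [h.assigned_div_speed hik (hc i hik), min_eq_left hcap]

lemma level_eq_level_of_le_capacity (h : IsGreedyAssignment k c m S L desW tw)
    (hc : ∀ i < k, 0 < c i) (hcap : ∀ i, d ≤ i → i < k → L d / S d ≤ m i / c i)
    (hdi : d ≤ i) (hi : i < k) : L i / S i = L d / S d := by
  induction i, hdi using Nat.le_induction with
  | base => rfl
  | succ i hdi ih =>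
    have hik : i < k := Nat.lt_of_succ_lt hi
    have level_eq : L i / S i = L d / S d := ih hik
    rw [h.level_succ_eq_level hc hi (level_eq.trans_le (hcap i hdi hik)), level_eq]

lemma level_le_level_of_le_capacity (h : IsGreedyAssignment k c m S L desW tw)
    (hc : ∀ i < k, 0 < c i) (hcap : ∀ i, d ≤ i → i < k → L d / S d ≤ m i / c i)
    (hd : d < k) (hi : i < k) : L i / S i ≤ L d / S d := by
  rcases le_total i d with hid | hdi
  · exact h.monotoneOn_level hc hi hd hid
  · exact (h.level_eq_level_of_le_capacity hc hcap hdi hi).le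

end IsGreedyAssignment

theorem stmt_10_general [IsStrictOrderedRing K] {k d : ℕ} {c m S L desW tw : ℕ → K}
    (h : IsGreedyAssignment k c m S L desW tw) (hc : ∀ i < k, 0 < c i) (hd : d < k)
    (hnonsat : desW d ≤ m d) (hsorted : ∀ i, d ≤ i → i < k → m d / c d ≤ m i / c i) :
    (Finset.range k).sup' ⟨d, Finset.mem_range.mpr hd⟩ (fun i ↦ tw i / c i) = L d / S d ∧
      L d / S d = tw d / c d := by
  have level_le : L d / S d ≤ m d / c d := (h.desired_le_capacity_iff hd (hc d hd)).mp hnonsat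
  have level_eq : L d / S d = tw d / c d := by
    rw [h.assigned_div_speed hd (hc d hd), min_eq_left level_le]
  have hcap : ∀ i, d ≤ i → i < k → L d / S d ≤ m i / c i :=
    fun i hdi hi ↦ level_le.trans (hsorted i hdi hi)
  refine ⟨le_antisymm (Finset.sup'_le _ _ fun i hi ↦ ?_) ?_, level_eq⟩
  · have hik : i < k := Finset.mem_range.mp hi
    calc tw i / c i = min (L i / S i) (m i / c i) := h.assigned_div_speed hik (hc i hik)
      _ ≤ L i / S i := min_le_left _ _
      _ ≤ L d / S d := h.level_le_level_of_le_capacity hc hcap hd hik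
  · rw [level_eq]
    exact Finset.le_sup' (fun i ↦ tw i / c i) (Finset.mem_range.mpr hd)

end

theorem stmt_10
    (k : ℕ) (hk : 1 ≤ k) (n : ℝ) (hn : 0 < n)
    (c m : ℕ → ℝ)
    (hc : ∀ i < k, 0 < c i) (hm : ∀ i < k, 0 < m i)
    (S L desW tw : ℕ → ℝ)
    (hS : ∀ i ≤ k, S i = ∑ j ∈ Finset.Ico i k, c j)
    (hL0 : L 0 = n)
    (hdesW : ∀ i < k, desW i = c i * L i / S i)
    (htw : ∀ i < k, tw i = min (desW i) (m i))
    (hLrec : ∀ i < k, L (i + 1) = L i - tw i)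
    (hsorted : ∀ i j, i ≤ j → j < k → c i / m i ≥ c j / m j)
    (d : ℕ) (hdk : d < k) (hd_nonsat : desW d ≤ m d)
    (hd_least : ∀ i < d, desW i > m i) :
    (Finset.range k).sup' (Finset.nonempty_range_iff.mpr (by omega))
        (fun i => tw i / c i) = L d / S d ∧
    L d / S d = tw d / c d := by
  refine stmt_10_general ⟨hS, hdesW, htw, hLrec⟩ hc hdk hd_nonsat fun i hdi hi ↦ ?_
  simpa only [inv_div] using inv_anti₀ (div_pos (hc i hi) (hm i hi)) (hsorted d i hdi hi)
end

section
/- Feasibility criterion: assume the PUs are sorted. If the total memory capacity suffices, i.e., ∑_{i=0}^{k−1} m i ≥ n, then PU (k−1) is non-saturated, and consequently ∑_{i=0}^{k−1} tw i = n. -/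
/-!
Call the load `L i` feasible at stage `i` if it fits into the memory of PUs `i, …, k - 1`.
Feasibility propagates from `i` to `i + 1`. If PU `i` is saturated, it removes its full capacity
from both sides. Otherwise, compare PU `i` with the remaining PUs merged into a single one, of speed
`C = ∑ j > i, c j` and capacity `M = ∑ j > i, m j`. By sortedness `C / M ≤ c i / m i`, so the
proportional share `C / (c i + C)` of a load of at most `m i + M` is at most `M`. At the last PU the
desired weight is the whole remaining load, and feasibility says precisely that it is non-saturated.
-/

open Finset

theorem sum_mul_le_mul_sum_of_forall_mul_le_mul {ι R : Type*}
    [NonUnitalNonAssocSemiring R] [PartialOrder R] [IsOrderedAddMonoid R]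
    {s : Finset ι} {c m : ι → R} {a b : R} (h : ∀ j ∈ s, c j * b ≤ a * m j) :
    (∑ j ∈ s, c j) * b ≤ a * ∑ j ∈ s, m j := by
  rw [sum_mul, mul_sum]
  exact sum_le_sum h

section LinearOrderedField

variable {K : Type*} [Field K] [LinearOrder K]

theorem sub_min_mul_div_add_le [IsStrictOrderedRing K] {c C m M x : K}
    (hC : 0 ≤ C) (hcC : 0 < c + C) (hratio : C * m ≤ c * M) (hx : x ≤ m + M) :
    x - min (c * x / (c + C)) m ≤ M := by
  have hshare : C * x ≤ M * (c + C) :=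
    calc C * x ≤ C * (m + M) := mul_le_mul_of_nonneg_left hx hC
      _ = C * m + C * M := mul_add C m M
      _ ≤ c * M + C * M := by gcongr
      _ = M * (c + C) := by ring
  rw [sub_le_comm, le_min_iff, le_div_iff₀ hcC]
  constructor <;> linarith

/-- A run of the greedy block-size algorithm: `k` PUs with speeds `c` and memory capacities `m`
share the total load `n`. Here `S i` is the total speed of PUs `i, …, k - 1`, `L i` the load left
for them, `desW i` the desired weight of PU `i` and `tw i` the weight it receives. The sequences are
indexed by `ℕ`, and nothing is required of their values beyond the `k` PUs. -/
structure IsGreedyRun_s11 (k : ℕ) (n : K) (c m S L desW tw : ℕ → K) : Prop where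
  speed_eq : ∀ i ≤ k, S i = ∑ j ∈ Ico i k, c j
  load_zero : L 0 = n
  desW_eq : ∀ i < k, desW i = c i * L i / S i
  tw_eq : ∀ i < k, tw i = min (desW i) (m i)
  load_succ : ∀ i < k, L (i + 1) = L i - tw i

namespace IsGreedyRun_s11

variable {k : ℕ} {n : K} {c m S L desW tw : ℕ → K}

theorem sum_tw_eq_sub (run : IsGreedyRun_s11 k n c m S L desW tw) :
    ∑ i ∈ range k, tw i = n - L k :=
  calc ∑ i ∈ range k, tw i = ∑ i ∈ range k, (L i - L (i + 1)) :=
        sum_congr rfl fun i hi => by rw [run.load_succ i (mem_range.1 hi), sub_sub_cancel]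
    _ = n - L k := by rw [sum_range_sub', run.load_zero]

theorem desW_last_eq_load (run : IsGreedyRun_s11 (k + 1) n c m S L desW tw) (hc : c k ≠ 0) :
    desW k = L k := by
  rw [run.desW_eq k k.lt_succ_self, run.speed_eq k k.le_succ, Nat.Ico_succ_singleton,
    sum_singleton, mul_div_cancel_left₀ _ hc]

variable [IsStrictOrderedRing K]

theorem load_succ_le_sum_capacity (run : IsGreedyRun_s11 k n c m S L desW tw) {i : ℕ} (hi : i < k)
    (hc : ∀ j ∈ Ico i k, 0 < c j) (hsorted : ∀ j ∈ Ico (i + 1) k, c j * m i ≤ c i * m j)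
    (hload : L i ≤ ∑ j ∈ Ico i k, m j) : L (i + 1) ≤ ∑ j ∈ Ico (i + 1) k, m j := by
  have hspeed : 0 < ∑ j ∈ Ico i k, c j := sum_pos hc (nonempty_Ico.2 hi)
  have hspeed_rest : 0 ≤ ∑ j ∈ Ico (i + 1) k, c j :=
    sum_nonneg fun j hj => (hc j (Ico_subset_Ico_left i.le_succ hj)).le
  rw [run.load_succ i hi, run.tw_eq i hi, run.desW_eq i hi, run.speed_eq i hi.le]
  rw [sum_eq_sum_Ico_succ_bot hi] at hspeed hload ⊢
  exact sub_min_mul_div_add_le hspeed_rest hspeed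
    (sum_mul_le_mul_sum_of_forall_mul_le_mul hsorted) hload

theorem load_le_sum_capacity (run : IsGreedyRun_s11 k n c m S L desW tw) (hc : ∀ i < k, 0 < c i)
    (hsorted : ∀ i j, i < j → j < k → c j * m i ≤ c i * m j) (hmem : n ≤ ∑ i ∈ range k, m i)
    {i : ℕ} (hi : i ≤ k) : L i ≤ ∑ j ∈ Ico i k, m j := by
  induction i with
  | zero => rwa [run.load_zero, ← range_eq_Ico]
  | succ i ih =>
    refine run.load_succ_le_sum_capacity hi (fun j hj => hc j (mem_Ico.1 hj).2) (fun j hj => ?_)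
      (ih (Nat.le_of_succ_le hi))
    obtain ⟨hij, hjk⟩ := mem_Ico.1 hj
    exact hsorted i j hij hjk

end IsGreedyRun_s11

/-- Sortedness is cross-multiplied, so that it is meaningful for capacities of any sign. -/
theorem stmt_11_general [IsStrictOrderedRing K] {k : ℕ} {n : K} {c m S L desW tw : ℕ → K}
    (run : IsGreedyRun_s11 (k + 1) n c m S L desW tw) (hc : ∀ i < k + 1, 0 < c i)
    (hsorted : ∀ i j, i < j → j < k + 1 → c j * m i ≤ c i * m j)
    (hmem : n ≤ ∑ i ∈ range (k + 1), m i) :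
    desW k ≤ m k ∧ ∑ i ∈ range (k + 1), tw i = n := by
  have hlast : desW k = L k := run.desW_last_eq_load (hc k k.lt_succ_self).ne'
  have hnonsat : desW k ≤ m k := by
    simpa only [hlast, Nat.Ico_succ_singleton, sum_singleton]
      using run.load_le_sum_capacity hc hsorted hmem k.le_succ
  have hexhausted : L (k + 1) = 0 := by
    rw [run.load_succ k k.lt_succ_self, run.tw_eq k k.lt_succ_self, min_eq_left hnonsat, hlast,
      sub_self]
  exact ⟨hnonsat, by rw [run.sum_tw_eq_sub, hexhausted, sub_zero]⟩

end LinearOrderedField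

theorem stmt_11
    (k : ℕ) (hk : 1 ≤ k) (n : ℝ) (hn : 0 < n)
    (c m : ℕ → ℝ)
    (hc : ∀ i < k, 0 < c i) (hm : ∀ i < k, 0 < m i)
    (S L desW tw : ℕ → ℝ)
    (hS : ∀ i ≤ k, S i = ∑ j ∈ Finset.Ico i k, c j)
    (hL0 : L 0 = n)
    (hdesW : ∀ i < k, desW i = c i * L i / S i)
    (htw : ∀ i < k, tw i = min (desW i) (m i))
    (hLrec : ∀ i < k, L (i + 1) = L i - tw i)
    (hsorted : ∀ i j, i ≤ j → j < k → c i / m i ≥ c j / m j)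
    (hmem : ∑ i ∈ Finset.range k, m i ≥ n) :
    desW (k - 1) ≤ m (k - 1) ∧ ∑ i ∈ Finset.range k, tw i = n := by
  obtain ⟨k, rfl⟩ := Nat.exists_eq_add_of_le' hk
  exact stmt_11_general ⟨hS, hL0, hdesW, htw, hLrec⟩ hc (fun i j hij hj =>
    (div_le_div_iff₀ (hm j hj) (hm i (hij.trans hj))).1 (hsorted i j hij.le hj)) hmem
end

section
/- Optimality of the greedy block sizes (Theorem 1): assume the PUs are sorted and ∑_{i=0}^{k−1} m i ≥ n. Then for every feasible assignment w : Fin k → ℝ, i.e., 0 ≤ w i ≤ m i for all i and ∑_{i=0}^{k−1} w i = n, the greedy output minimizes the maximum normalized load: max_{0 ≤ i ≤ k−1} (tw i / c i) ≤ max_{0 ≤ i ≤ k−1} (w i / c i). -/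
/-!
Fix a level `M` and let the *level capacity* of a set of PUs be the load it can take while every
normalized load stays at most `M`. If some assignment has maximum normalized load at most `M`, then
`n` is at most the level capacity of all PUs. The greedy run keeps this invariant: the load that is
left never exceeds the level capacity of the PUs that are left. For either the current PU takes at
least its share `min (M * c i) (m i)`, or it takes less; in that case it is not saturated and the
common rate `r` proposed for all remaining PUs is below `M`, and since `m i / c i` is
nondecreasing, none of the later PUs saturates at rate `r` either. By the invariant, the rate
proposed at any stage is at most `M`.
-/

section GreedyBlockSizes

variable {ι K : Type*} [Field K] [LinearOrder K]

/-- The largest total load that the PUs in `s`, with speeds `c` and memory capacities `m`, can hold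
when every normalized load is at most `M`. Negative loads are allowed, so this is a plain sum of
minima. -/
def levelCapacity (c m : ι → K) (s : Finset ι) (M : K) : K :=
  ∑ j ∈ s, min (M * c j) (m j)

/-- `L` and `t` record a run of the greedy block-size algorithm on the PUs `0, …, k - 1` with total
load `n`: `L i` is the load left when PU `i` is reached and `t i` the load it receives. The sum of
the remaining speeds and the desired load of PU `i` are inlined; values from `k` on (`k + 1` for
`L`) are unconstrained. -/
structure IsGreedyRun_s12 (k : ℕ) (n : K) (c m L t : ℕ → K) : Prop where
  remaining_zero : L 0 = n
  load_eq : ∀ i < k, t i = min (c i * L i / ∑ j ∈ Finset.Ico i k, c j) (m i)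
  remaining_succ : ∀ i < k, L (i + 1) = L i - t i

lemma levelCapacity_Ico_eq_add {c m : ℕ → K} {i k : ℕ} (hik : i < k) (M : K) :
    levelCapacity c m (Finset.Ico i k) M =
      min (M * c i) (m i) + levelCapacity c m (Finset.Ico (i + 1) k) M :=
  Finset.sum_eq_sum_Ico_succ_bot hik _

variable [IsStrictOrderedRing K]

section LevelCapacity

variable {c m : ι → K} {s : Finset ι} {M : K}

lemma levelCapacity_le_mul_sum : levelCapacity c m s M ≤ M * ∑ j ∈ s, c j := by
  rw [Finset.mul_sum]
  exact Finset.sum_le_sum fun _ _ => min_le_left _ _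

lemma sum_le_levelCapacity {w : ι → K} (hwM : ∀ j ∈ s, w j ≤ M * c j)
    (hwm : ∀ j ∈ s, w j ≤ m j) : ∑ j ∈ s, w j ≤ levelCapacity c m s M :=
  Finset.sum_le_sum fun j hj => le_min (hwM j hj) (hwm j hj)

lemma sub_min_le_levelCapacity {c₀ m₀ L : K} (hc₀ : 0 < c₀) (hc : ∀ j ∈ s, 0 < c j)
    (hratio : ∀ j ∈ s, m₀ / c₀ ≤ m j / c j)
    (hL : L ≤ min (M * c₀) m₀ + levelCapacity c m s M) :
    L - min (c₀ * L / (c₀ + ∑ j ∈ s, c j)) m₀ ≤ levelCapacity c m s M := by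
  have hC : 0 < c₀ + ∑ j ∈ s, c j :=
    add_pos_of_pos_of_nonneg hc₀ (Finset.sum_nonneg fun j hj => (hc j hj).le)
  obtain ⟨r, rfl⟩ : ∃ r, L = r * (c₀ + ∑ j ∈ s, c j) := ⟨_, (div_mul_cancel₀ L hC.ne').symm⟩
  have hdes : c₀ * (r * (c₀ + ∑ j ∈ s, c j)) / (c₀ + ∑ j ∈ s, c j) = r * c₀ := by
    rw [← mul_assoc, mul_div_cancel_right₀ _ hC.ne', mul_comm]
  rw [hdes]
  rcases le_or_gt (min (M * c₀) m₀) (min (r * c₀) m₀) with htakes | htakes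
  · linarith
  · obtain ⟨hM, hm⟩ := lt_min_iff.mp htakes
    have hunsat : r * c₀ < m₀ := (min_lt_iff.mp hm).resolve_right (lt_irrefl _)
    rw [min_eq_left hunsat.le] at hM ⊢
    have hrM : r ≤ M := (lt_of_mul_lt_mul_right hM hc₀.le).le
    have hr : r ≤ m₀ / c₀ := (le_div_iff₀ hc₀).mpr hunsat.le
    calc r * (c₀ + ∑ j ∈ s, c j) - r * c₀ = ∑ j ∈ s, r * c j := by
          rw [← Finset.mul_sum]; ring
      _ ≤ levelCapacity c m s M := sum_le_levelCapacity
          (fun j hj => mul_le_mul_of_nonneg_right hrM (hc j hj).le)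
          (fun j hj => (le_div_iff₀ (hc j hj)).mp (hr.trans (hratio j hj)))

end LevelCapacity

namespace IsGreedyRun_s12

variable {k : ℕ} {n M : K} {c m L t : ℕ → K}

lemma remaining_le_levelCapacity (h : IsGreedyRun_s12 k n c m L t) (hc : ∀ i < k, 0 < c i)
    (hratio : MonotoneOn (fun i => m i / c i) (Set.Iio k))
    (hn : n ≤ levelCapacity c m (Finset.range k) M) :
    ∀ i ≤ k, L i ≤ levelCapacity c m (Finset.Ico i k) M := by
  intro i
  induction i with
  | zero => rw [h.remaining_zero, ← Finset.range_eq_Ico]; exact fun _ => hn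
  | succ i ih =>
    intro hik
    rw [h.remaining_succ i hik, h.load_eq i hik, Finset.sum_eq_sum_Ico_succ_bot hik]
    refine sub_min_le_levelCapacity (hc i hik) (fun j hj => hc j (Finset.mem_Ico.mp hj).2)
      (fun j hj => ?_) (levelCapacity_Ico_eq_add hik M ▸ ih (Nat.le_of_succ_le hik))
    obtain ⟨hij, hjk⟩ := Finset.mem_Ico.mp hj
    exact hratio hik hjk (Nat.le_of_succ_le hij)

lemma load_div_le (h : IsGreedyRun_s12 k n c m L t) (hc : ∀ i < k, 0 < c i)
    (hratio : MonotoneOn (fun i => m i / c i) (Set.Iio k))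
    (hn : n ≤ levelCapacity c m (Finset.range k) M) {i : ℕ} (hik : i < k) :
    t i / c i ≤ M := by
  have hS : 0 < ∑ j ∈ Finset.Ico i k, c j :=
    Finset.sum_pos (fun j hj => hc j (Finset.mem_Ico.mp hj).2) (Finset.nonempty_Ico.mpr hik)
  have hrate : L i / ∑ j ∈ Finset.Ico i k, c j ≤ M := (div_le_iff₀ hS).mpr <|
    (h.remaining_le_levelCapacity hc hratio hn i hik.le).trans levelCapacity_le_mul_sum
  rw [div_le_iff₀' (hc i hik), h.load_eq i hik]
  calc min (c i * L i / ∑ j ∈ Finset.Ico i k, c j) (m i)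
      ≤ c i * (L i / ∑ j ∈ Finset.Ico i k, c j) := (min_le_left _ _).trans_eq (mul_div_assoc ..)
    _ ≤ c i * M := mul_le_mul_of_nonneg_left hrate (hc i hik).le

end IsGreedyRun_s12

theorem stmt_12_general {k : ℕ} {n : K} {c m L t w : ℕ → K} (hk : (Finset.range k).Nonempty)
    (h : IsGreedyRun_s12 k n c m L t) (hc : ∀ i < k, 0 < c i)
    (hratio : MonotoneOn (fun i => m i / c i) (Set.Iio k))
    (hwm : ∀ i < k, w i ≤ m i) (hn : n ≤ ∑ i ∈ Finset.range k, w i) :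
    (Finset.range k).sup' hk (fun i => t i / c i) ≤
      (Finset.range k).sup' hk (fun i => w i / c i) := by
  refine Finset.sup'_le _ _ fun i hi => h.load_div_le hc hratio ?_ (Finset.mem_range.mp hi)
  refine hn.trans (sum_le_levelCapacity (fun j hj => ?_) fun j hj => hwm j (Finset.mem_range.mp hj))
  exact (div_le_iff₀ (hc j (Finset.mem_range.mp hj))).mp
    (Finset.le_sup' (fun j => w j / c j) hj)

end GreedyBlockSizes

theorem stmt_12
    (k : ℕ) (hk : 1 ≤ k) (n : ℝ) (hn : 0 < n)
    (c m : ℕ → ℝ)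
    (hc : ∀ i < k, 0 < c i) (hm : ∀ i < k, 0 < m i)
    (S L desW tw : ℕ → ℝ)
    (hS : ∀ i ≤ k, S i = ∑ j ∈ Finset.Ico i k, c j)
    (hL0 : L 0 = n)
    (hdesW : ∀ i < k, desW i = c i * L i / S i)
    (htw : ∀ i < k, tw i = min (desW i) (m i))
    (hLrec : ∀ i < k, L (i + 1) = L i - tw i)
    (hsorted : ∀ i j, i ≤ j → j < k → c i / m i ≥ c j / m j)
    (hmem : ∑ i ∈ Finset.range k, m i ≥ n)
    (w : ℕ → ℝ)
    (hw_feas : ∀ i < k, 0 ≤ w i ∧ w i ≤ m i)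
    (hw_sum : ∑ i ∈ Finset.range k, w i = n) :
    (Finset.range k).sup' (Finset.nonempty_range_iff.mpr (by omega))
        (fun i => tw i / c i) ≤
    (Finset.range k).sup' (Finset.nonempty_range_iff.mpr (by omega))
        (fun i => w i / c i) := by
  have hrun : IsGreedyRun_s12 k n c m L tw :=
    ⟨hL0, fun i hi => by rw [htw i hi, hdesW i hi, hS i hi.le], hLrec⟩
  have hratio : MonotoneOn (fun i => m i / c i) (Set.Iio k) := fun i _ j hj hij => by
    simpa only [inv_div] using
      inv_anti₀ (div_pos (hc j hj) (hm j hj)) (hsorted i j hij hj)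
  exact stmt_12_general _ hrun hc hratio (fun i hi => (hw_feas i hi).2) hw_sum.ge
end

section
/- Assume the PUs are sorted and PU d (0 ≤ d ≤ k−1) is non-saturated. Then the common normalized load of the non-saturated PUs is at least the homogeneous ideal n / S 0: L d · S 0 ≥ n · S d, i.e., L d / S d ≥ n / S 0. -/
/-!
A unit that takes at most its proportional share `c * x / s` of the remaining load `x` leaves at
least `x * (s - c) / s` for the others, whose total speed is `s - c`; hence the remaining load per
unit of remaining speed does not decrease. So `L i / S i` is nondecreasing in `i`, and its initial
value is the homogeneous ideal.
-/

section ProportionalShare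

variable {K : Type*} [Field K] [LinearOrder K] [IsStrictOrderedRing K]

theorem div_le_sub_div_sub_of_le_mul_div {c s t x : K} (hs : 0 < s) (hcs : c < s)
    (ht : t ≤ c * x / s) : x / s ≤ (x - t) / (s - c) := by
  rw [le_div_iff₀ (sub_pos.mpr hcs)]
  calc
    x / s * (s - c) = x - c * x / s := by field_simp
    _ ≤ x - t := sub_le_sub_left ht x

theorem monotoneOn_div_of_le_mul_div {k : ℕ} {c S L tw : ℕ → K}
    (hS_pos : ∀ i < k, 0 < S i)
    (hS_succ : ∀ i, i + 1 < k → S (i + 1) = S i - c i)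
    (htw : ∀ i, i + 1 < k → tw i ≤ c i * L i / S i)
    (hL_succ : ∀ i, i + 1 < k → L (i + 1) = L i - tw i) :
    MonotoneOn (fun i ↦ L i / S i) (Set.Iio k) := by
  refine monotoneOn_of_le_add_one Set.ordConnected_Iio fun i _ hi hi_succ ↦ ?_
  have hcS : c i < S i := sub_pos.mp (hS_succ i hi_succ ▸ hS_pos (i + 1) hi_succ)
  simpa only [hS_succ i hi_succ, hL_succ i hi_succ] using
    div_le_sub_div_sub_of_le_mul_div (hS_pos i hi) hcS (htw i hi_succ)

theorem stmt_13_general {k : ℕ} {c S L tw : ℕ → K}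
    (hS : ∀ i < k, S i = ∑ j ∈ Finset.Ico i k, c j)
    (hS_pos : ∀ i < k, 0 < S i)
    (htw : ∀ i, i + 1 < k → tw i ≤ c i * L i / S i)
    (hL_succ : ∀ i, i + 1 < k → L (i + 1) = L i - tw i)
    {d : ℕ} (hd : d < k) :
    L d * S 0 ≥ L 0 * S d ∧ L d / S d ≥ L 0 / S 0 := by
  have hk : 0 < k := d.zero_le.trans_lt hd
  have hS_succ (i : ℕ) (hi : i + 1 < k) : S (i + 1) = S i - c i := by
    have hik : i < k := i.lt_succ_self.trans hi
    rw [hS i hik, hS (i + 1) hi, Finset.sum_eq_sum_Ico_succ_bot hik, add_sub_cancel_left]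
  have h_div : L 0 / S 0 ≤ L d / S d :=
    monotoneOn_div_of_le_mul_div hS_pos hS_succ htw hL_succ hk hd d.zero_le
  exact ⟨(div_le_div_iff₀ (hS_pos 0 hk) (hS_pos d hd)).mp h_div, h_div⟩

end ProportionalShare

theorem stmt_13
    (k : ℕ) (hk : 1 ≤ k) (n : ℝ) (hn : 0 < n)
    (c m : ℕ → ℝ)
    (hc : ∀ i < k, 0 < c i) (hm : ∀ i < k, 0 < m i)
    (S L desW tw : ℕ → ℝ)
    (hS : ∀ i ≤ k, S i = ∑ j ∈ Finset.Ico i k, c j)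
    (hL0 : L 0 = n)
    (hdesW : ∀ i < k, desW i = c i * L i / S i)
    (htw : ∀ i < k, tw i = min (desW i) (m i))
    (hLrec : ∀ i < k, L (i + 1) = L i - tw i)
    (hsorted : ∀ i j, i ≤ j → j < k → c i / m i ≥ c j / m j)
    (d : ℕ) (hdk : d < k) (hd_nonsat : desW d ≤ m d) :
    L d * S 0 ≥ n * S d ∧ L d / S d ≥ n / S 0 := by
  have hS_pos (i : ℕ) (hi : i < k) : 0 < S i := hS i hi.le ▸
    Finset.sum_pos (fun j hj ↦ hc j (Finset.mem_Ico.mp hj).2) (Finset.nonempty_Ico.mpr hi)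
  have htw_le (i : ℕ) (hi : i < k) : tw i ≤ c i * L i / S i :=
    hdesW i hi ▸ htw i hi ▸ min_le_left _ _
  exact hL0 ▸ stmt_13_general (fun i hi ↦ hS i hi.le) hS_pos
    (fun i hi ↦ htw_le i (i.lt_succ_self.trans hi))
    (fun i hi ↦ hLrec i (i.lt_succ_self.trans hi)) hdk
end

section
/- Uniqueness of the proportional optimum: let n be a real number and let w : ι → ℝ satisfy ∑_{i∈ι} w i = n. Then max_{i∈ι} (w i / c i) = n / (∑_{j∈ι} c j) if and only if w i = n · c i / (∑_{j∈ι} c j) for every i ∈ ι. -/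
/-!
A bound `w i ≤ t * c i` for all `i` that becomes an equality after summation must be an equality
for each `i`. If the largest ratio `w i / c i` is the overall ratio `t = (∑ w) / (∑ c)`, this
rigidity applies, so every ratio is equal to `t`.
-/

theorem forall_eq_mul_of_forall_le_mul {ι R : Type*} [NonUnitalNonAssocSemiring R]
    [PartialOrder R] [IsOrderedCancelAddMonoid R] {s : Finset ι} {c w : ι → R} {t : R}
    (hle : ∀ i ∈ s, w i ≤ t * c i) (hsum : ∑ i ∈ s, w i = t * ∑ i ∈ s, c i) :
    ∀ i ∈ s, w i = t * c i := by
  rw [Finset.mul_sum] at hsum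
  exact (Finset.sum_eq_sum_iff_of_le hle).mp hsum

section GroupWithZero

variable {ι G : Type*} [GroupWithZero G] [SemilatticeSup G]
  {s : Finset ι} (hs : s.Nonempty) {c w : ι → G} {t : G}

theorem sup'_div_le_iff [MulPosReflectLT G] (hc : ∀ i ∈ s, 0 < c i) :
    s.sup' hs (fun i ↦ w i / c i) ≤ t ↔ ∀ i ∈ s, w i ≤ t * c i := by
  rw [Finset.sup'_le_iff]
  exact forall₂_congr fun i hi ↦ div_le_iff₀ (hc i hi)

theorem sup'_div_eq_of_forall_eq_mul (hc : ∀ i ∈ s, c i ≠ 0) (hw : ∀ i ∈ s, w i = t * c i) :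
    s.sup' hs (fun i ↦ w i / c i) = t := by
  have hratio : ∀ i ∈ s, w i / c i = t := fun i hi ↦ (div_eq_iff (hc i hi)).mpr (hw i hi)
  rw [Finset.sup'_congr hs rfl hratio, Finset.sup'_const]

end GroupWithZero

theorem sup'_div_eq_iff_forall_eq_mul {ι K : Type*} [DivisionSemiring K] [LinearOrder K]
    [IsStrictOrderedRing K] {s : Finset ι} (hs : s.Nonempty) {c w : ι → K} {t : K}
    (hc : ∀ i ∈ s, 0 < c i) (hsum : ∑ i ∈ s, w i = t * ∑ i ∈ s, c i) :
    s.sup' hs (fun i ↦ w i / c i) = t ↔ ∀ i ∈ s, w i = t * c i := by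
  refine ⟨fun hmax ↦ ?_, sup'_div_eq_of_forall_eq_mul hs fun i hi ↦ (hc i hi).ne'⟩
  have hle : ∀ i ∈ s, w i ≤ t * c i := (sup'_div_le_iff hs hc).mp hmax.le
  exact forall_eq_mul_of_forall_le_mul hle hsum

theorem stmt_16_general {ι K : Type*} [Semifield K] [LinearOrder K] [IsStrictOrderedRing K]
    {s : Finset ι} (hs : s.Nonempty) {c w : ι → K} (hc : ∀ i ∈ s, 0 < c i) {n : K}
    (hw : ∑ i ∈ s, w i = n) :
    s.sup' hs (fun i ↦ w i / c i) = n / ∑ j ∈ s, c j ↔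
      ∀ i ∈ s, w i = n * c i / ∑ j ∈ s, c j := by
  have hpos : 0 < ∑ j ∈ s, c j := Finset.sum_pos hc hs
  have hsum : ∑ i ∈ s, w i = n / (∑ j ∈ s, c j) * ∑ j ∈ s, c j := by
    rw [hw, div_mul_cancel₀ n hpos.ne']
  simpa only [div_mul_eq_mul_div] using sup'_div_eq_iff_forall_eq_mul hs hc hsum

theorem stmt_16 {ι : Type*} [Fintype ι] [Nonempty ι]
    (c : ι → ℝ) (hc : ∀ i, 0 < c i) (n : ℝ)
    (w : ι → ℝ) (hw : (∑ i, w i) = n) :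
    Finset.univ.sup' Finset.univ_nonempty (fun i => w i / c i) = n / (∑ j, c j) ↔
    ∀ i, w i = n * c i / (∑ j, c j) := by
  simpa only [Finset.mem_univ, forall_const] using
    stmt_16_general Finset.univ_nonempty (fun i _ ↦ hc i) hw
end
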